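/- arXiv:1205.6980 — 6 statements merged into one kernel-verified Lean document; each statement's English description precedes it below -/
import Mathlib

section
/- Fix δ ∈ ℤ. Call a sequence x : {1,2,…} → ℝ dominant if it is strictly decreasing, and call two sequences x, y adjacent if y − x = ε_i or y − x = −ε_i for some i ≥ 1, where ε_i denotes the sequence with 1 in position i and 0 elsewhere. Then the map λ ↦ e_δ(λ) is a bijection from the set of all partitions onto the set of dominant sequences x for which there exists a finite chain ρ_δ = x⁽⁰⁾, x⁽¹⁾, …, x⁽ʳ⁾ = x of dominant sequences in which consecutive terms are adjacent; moreover, for partitions λ and μ, the sequences e_δ(λ) and e_δ(μ) are adjacent if and only if μ is obtained from λ by adding or removing a single box. (That is, e_δ is a graph isomorphism from the Young graph onto the connected component of ρ_δ in the dominant part of the lattice graph.) -/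
open Polynomial

/-- A partition: a weakly decreasing, finitely supported sequence of naturals λ_1, λ_2, …. -/
structure Ptn where
  toFun : ℕ+ → ℕ
  antitone' : ∀ i j : ℕ+, i ≤ j → toFun j ≤ toFun i
  finite_support' : ∃ N : ℕ+, ∀ i : ℕ+, N ≤ i → toFun i = 0

namespace Ptn

/-- The transpose partition: λ^T_i = #{k ≥ 1 : λ_k ≥ i}. -/
noncomputable def transpose (p : Ptn) (i : ℕ+) : ℕ :=
  Set.ncard {k : ℕ+ | (i : ℕ) ≤ p.toFun k}

/-- The empty partition. -/
def empty : Ptn where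
  toFun := fun _ => 0
  antitone' := fun _ _ _ => le_refl 0
  finite_support' := ⟨1, fun _ _ => rfl⟩

end Ptn

/-- e_δ(λ)_i = λ^T_i − δ/2 − i + 1. -/
noncomputable def ed (δ : ℤ) (p : Ptn) (i : ℕ+) : ℚ :=
  (p.transpose i : ℚ) - (δ : ℚ) / 2 - ((i : ℕ) : ℚ) + 1

/-- The δ-degree of singularity: #{(i,j) : 1 ≤ i < j, e_δ(λ)_i + e_δ(λ)_j = 0}. -/
noncomputable def degd (δ : ℤ) (p : Ptn) : ℕ :=
  Set.ncard {q : ℕ+ × ℕ+ | q.1 < q.2 ∧ ed δ p q.1 + ed δ p q.2 = 0}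

/-- The vertex set L: nonnegative integers if δ is even, {1/2, 3/2, …} if δ is odd. -/
def Lset (δ : ℤ) : Set ℚ :=
  {n : ℚ | 0 ≤ n ∧ ∃ k : ℤ, n + (δ : ℚ) / 2 = (k : ℚ)}

/-- Vertex n is labelled ∘ in x_λ: no entry of e_δ(λ) has absolute value n. -/
def IsCirc (δ : ℤ) (p : Ptn) (n : ℚ) : Prop := ∀ i : ℕ+, |ed δ p i| ≠ n

/-- Vertex n is labelled × in x_λ: n > 0 and both n and −n occur as entries. -/
def IsTimes (δ : ℤ) (p : Ptn) (n : ℚ) : Prop :=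
  0 < n ∧ (∃ i : ℕ+, ed δ p i = n) ∧ (∃ i : ℕ+, ed δ p i = -n)

/-- Vertex n is labelled ∧ in x_λ: n > 0, n occurs as an entry and −n does not. -/
def IsUp (δ : ℤ) (p : Ptn) (n : ℚ) : Prop :=
  0 < n ∧ (∃ i : ℕ+, ed δ p i = n) ∧ ¬ (∃ i : ℕ+, ed δ p i = -n)

/-- Vertex n is labelled ∨ in x_λ: n > 0, −n occurs and n does not, or n = 0 and 0 occurs. -/
def IsDown (δ : ℤ) (p : Ptn) (n : ℚ) : Prop :=
  (0 < n ∧ (∃ i : ℕ+, ed δ p i = -n) ∧ ¬ (∃ i : ℕ+, ed δ p i = n)) ∨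
  (n = 0 ∧ ∃ i : ℕ+, ed δ p i = 0)

/-- q is obtained from p by adding one box, in row k. -/
def AddBoxAt (p q : Ptn) (k : ℕ+) : Prop :=
  q.toFun k = p.toFun k + 1 ∧ ∀ t : ℕ+, t ≠ k → q.toFun t = p.toFun t

/-- q is obtained from p by removing one box, from row l. -/
def RemoveBoxAt (p q : Ptn) (l : ℕ+) : Prop :=
  q.toFun l + 1 = p.toFun l ∧ ∀ t : ℕ+, t ≠ l → q.toFun t = p.toFun t

/-- A box is addable to p at position (k,i): λ_k + 1 = i and increasing the k-th part
yields a partition. -/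
def AddableAt (p : Ptn) (k i : ℕ+) : Prop :=
  p.toFun k + 1 = (i : ℕ) ∧ ∃ q : Ptn, AddBoxAt p q k

/-- A box is removable from p at position (l,j): λ_l = j and decreasing the l-th part
yields a partition. -/
def RemovableAt (p : Ptn) (l j : ℕ+) : Prop :=
  p.toFun l = (j : ℕ) ∧ ∃ q : Ptn, RemoveBoxAt p q l

/-- Edge of the Young graph: q is obtained from p by adding or removing a single box. -/
def YoungEdge (p q : Ptn) : Prop := (∃ k, AddBoxAt p q k) ∨ (∃ k, AddBoxAt q p k)

/-- d(i,j) = λ_i + λ_j − i − j + 1 if i ≤ j, and −λ^T_i − λ^T_j + i + j − 1 if i > j. -/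
noncomputable def dbox (p : Ptn) (i j : ℕ+) : ℤ :=
  if (i : ℕ) ≤ (j : ℕ) then
    (p.toFun i : ℤ) + (p.toFun j : ℤ) - ((i : ℕ) : ℤ) - ((j : ℕ) : ℤ) + 1
  else
    -(p.transpose i : ℤ) - (p.transpose j : ℤ) + ((i : ℕ) : ℤ) + ((j : ℕ) : ℤ) - 1

/-- Hook length h(i,j) = λ_i − j + λ^T_j − i + 1. -/
noncomputable def hook (p : Ptn) (i j : ℕ+) : ℤ :=
  (p.toFun i : ℤ) - ((j : ℕ) : ℤ) + (p.transpose j : ℤ) - ((i : ℕ) : ℤ) + 1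

/-- The King polynomial P_λ(u) = ∏_{(i,j)∈[λ]} (u − 1 + d(i,j)) / h(i,j) ∈ ℚ[u]. -/
noncomputable def king (p : Ptn) : Polynomial ℚ :=
  ∏ᶠ (q : ℕ+ × ℕ+) (_ : (q.2 : ℕ) ≤ p.toFun q.1),
    Polynomial.C ((hook p q.1 q.2 : ℚ))⁻¹ *
      (Polynomial.X + Polynomial.C ((dbox p q.1 q.2 : ℚ) - 1))

/-- (ρ_δ)_i = −δ/2 − i + 1. -/
def rhod (δ : ℤ) (i : ℕ+) : ℚ := -(δ : ℚ) / 2 - ((i : ℕ) : ℚ) + 1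

/-- A sequence is dominant if it is strictly decreasing. -/
def Dominant (x : ℕ+ → ℚ) : Prop := ∀ i j : ℕ+, i < j → x j < x i

/-- ε_i: the sequence with 1 in position i and 0 elsewhere. -/
def eps (i : ℕ+) : ℕ+ → ℚ := fun j => if j = i then 1 else 0

/-- Two sequences are adjacent if they differ by ±ε_i for some i. -/
def AdjacentSeq (x y : ℕ+ → ℚ) : Prop := ∃ i : ℕ+, y = x + eps i ∨ y = x - eps i

/-- x lies in the connected component of ρ_δ in the dominant part of the lattice graph:
x is dominant and is joined to ρ_δ by a finite chain of pairwise adjacent dominant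
sequences. -/
def InComponent (δ : ℤ) (x : ℕ+ → ℚ) : Prop :=
  Dominant x ∧ ∃ (r : ℕ) (c : ℕ → ℕ+ → ℚ),
    c 0 = rhod δ ∧ c r = x ∧ (∀ t ≤ r, Dominant (c t)) ∧
    ∀ t < r, AdjacentSeq (c t) (c (t + 1))

/-- λ ∈ A_δ: λ is joined to ∅ in the Young graph by a chain of δ-regular partitions. -/
def InAdelta (δ : ℤ) (p : Ptn) : Prop :=
  ∃ (r : ℕ) (c : ℕ → Ptn), c 0 = Ptn.empty ∧ c r = p ∧
    (∀ t ≤ r, degd δ (c t) = degd δ Ptn.empty) ∧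
    ∀ t < r, YoungEdge (c t) (c (t + 1))

theorem Ptn.le_transpose_iff (p : Ptn) (i k : ℕ+) :
    (k : ℕ) ≤ p.transpose i ↔ (i : ℕ) ≤ p.toFun k := by
  have hsub : ∀ m : ℕ+, ¬ (i : ℕ) ≤ p.toFun m →
      {k : ℕ+ | (i : ℕ) ≤ p.toFun k} ⊆ ((Finset.Iio m : Finset ℕ+) : Set ℕ+) := by
    intro m hm j hj
    simp only [Set.mem_ofPred_eq] at hj
    simp only [Finset.coe_Iio, Set.mem_Iio]
    by_contra hlt
    have := p.antitone' m j (not_lt.mp hlt)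
    omega
  have hfin : {k : ℕ+ | (i : ℕ) ≤ p.toFun k}.Finite := by
    obtain ⟨N, hN⟩ := p.finite_support'
    apply Set.Finite.subset (Finset.finite_toSet _) (hsub N _)
    have := hN N le_rfl
    have := i.pos
    omega
  unfold Ptn.transpose
  constructor
  · intro h
    by_contra hc
    have h1 := Set.ncard_le_ncard (hsub k hc) (Finset.finite_toSet _)
    rw [Set.ncard_coe_finset] at h1
    have h2 : (Finset.Iio k).card = (k : ℕ) - 1 := by
      have : Finset.Iio k = Finset.Ico 1 k := by
        ext j; simp
      rw [this, PNat.card_Ico]; simp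
    have := k.pos
    omega
  · intro h
    have hs : ((Finset.Icc 1 k : Finset ℕ+) : Set ℕ+) ⊆ {k : ℕ+ | (i : ℕ) ≤ p.toFun k} := by
      intro j hj
      simp only [Finset.coe_Icc, Set.mem_Icc] at hj
      exact h.trans (p.antitone' j k hj.2)
    have h1 := Set.ncard_le_ncard hs hfin
    rw [Set.ncard_coe_finset, PNat.card_Icc] at h1
    simpa using h1

theorem nat_eq_of_pnat_le {a b : ℕ} (h : ∀ k : ℕ+, (k : ℕ) ≤ a ↔ (k : ℕ) ≤ b) : a = b := by
  apply le_antisymm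
  · rcases Nat.eq_zero_or_pos a with h0 | h0
    · omega
    · exact (h ⟨a, h0⟩).1 le_rfl
  · rcases Nat.eq_zero_or_pos b with h0 | h0
    · omega
    · exact (h ⟨b, h0⟩).2 le_rfl

theorem Ptn.eq_of_toFun {p q : Ptn} (h : ∀ i, p.toFun i = q.toFun i) : p = q := by
  cases p; cases q
  simp only [Ptn.mk.injEq]
  exact funext h

/-- The transpose as a partition. -/
noncomputable def Ptn.tr (p : Ptn) : Ptn where
  toFun := p.transpose
  antitone' := by
    intro i j hij
    rcases Nat.eq_zero_or_pos (p.transpose j) with h0 | h0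
    · omega
    · have h1 := (p.le_transpose_iff j ⟨_, h0⟩).1 le_rfl
      have h2 : (i : ℕ) ≤ j := hij
      exact (p.le_transpose_iff i ⟨_, h0⟩).2 (h2.trans h1)
  finite_support' := by
    refine ⟨⟨p.toFun 1 + 1, Nat.succ_pos _⟩, fun i hi => ?_⟩
    by_contra hne
    have h1 := (p.le_transpose_iff i 1).1 (Nat.one_le_iff_ne_zero.2 hne)
    have h2 : p.toFun 1 + 1 ≤ (i : ℕ) := hi
    omega

theorem Ptn.tr_tr (p : Ptn) : p.tr.tr = p := by
  apply Ptn.eq_of_toFun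
  intro i
  apply nat_eq_of_pnat_le
  intro k
  exact (p.tr.le_transpose_iff i k).trans (p.le_transpose_iff k i)

theorem AddBoxAt.tr {p q : Ptn} {k : ℕ+} (h : AddBoxAt p q k) :
    ∃ i, AddBoxAt p.tr q.tr i := by
  obtain ⟨hk, ht⟩ := h
  refine ⟨⟨p.toFun k + 1, Nat.succ_pos _⟩, ?_, ?_⟩
  · set i : ℕ+ := ⟨p.toFun k + 1, Nat.succ_pos _⟩ with hi
    have hiv : (i : ℕ) = p.toFun k + 1 := rfl
    change q.transpose i = p.transpose i + 1
    have a1 : (k : ℕ) ≤ q.transpose i := (q.le_transpose_iff i k).2 (by omega)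
    have a2 : ¬ ((k : ℕ) ≤ p.transpose i) := by
      rw [p.le_transpose_iff]; omega
    have a3 : ¬ (((k + 1 : ℕ+) : ℕ) ≤ q.transpose i) := by
      rw [q.le_transpose_iff, ht _ (by intro h; have := congrArg PNat.val h; simp at this)]
      have := p.antitone' k (k + 1) (by exact_mod_cast (PNat.lt_add_right k 1).le)
      omega
    have a4 : (k : ℕ) - 1 ≤ p.transpose i := by
      rcases Nat.eq_zero_or_pos ((k : ℕ) - 1) with h0 | h0
      · omega
      · set j : ℕ+ := ⟨(k : ℕ) - 1, h0⟩ with hj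
        have hjv : (j : ℕ) = k - 1 := rfl
        have hjk : j < k := by
          rw [← PNat.coe_lt_coe]; omega
        have := q.antitone' j k hjk.le
        rw [ht j hjk.ne] at this
        exact (p.le_transpose_iff i j).2 (by omega)
    rw [PNat.add_coe, PNat.one_coe] at a3
    omega
  · intro i' hne
    have hne' : (i' : ℕ) ≠ p.toFun k + 1 := fun h => hne (PNat.eq h)
    change q.transpose i' = p.transpose i'
    apply nat_eq_of_pnat_le
    intro j
    rw [q.le_transpose_iff, p.le_transpose_iff]
    by_cases hj : j = k
    · subst hj; omega
    · rw [ht j hj]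

theorem addBox_tr_iff (p q : Ptn) :
    (∃ i, AddBoxAt p.tr q.tr i) ↔ ∃ k, AddBoxAt p q k := by
  constructor
  · rintro ⟨i, hi⟩
    have := hi.tr
    rwa [Ptn.tr_tr, Ptn.tr_tr] at this
  · rintro ⟨k, hk⟩
    exact hk.tr

theorem ed_add_iff (δ : ℤ) (p q : Ptn) (i : ℕ+) :
    ed δ q = ed δ p + eps i ↔ AddBoxAt p.tr q.tr i := by
  have key : ∀ j, (ed δ q j = (ed δ p + eps i) j ↔
      q.transpose j = p.transpose j + if j = i then 1 else 0) := by
    intro j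
    simp only [ed, Pi.add_apply, eps]
    rw [← Nat.cast_inj (R := ℚ)]
    push_cast
    constructor <;> intro h <;> linarith
  rw [funext_iff]
  simp only [key]
  constructor
  · intro h
    exact ⟨by simpa [Ptn.tr] using h i, fun t ht => by simpa [Ptn.tr, ht] using h t⟩
  · rintro ⟨h1, h2⟩ j
    by_cases hj : j = i
    · subst hj; simpa [Ptn.tr] using h1
    · simpa [Ptn.tr, hj] using h2 j hj

theorem adj_iff (δ : ℤ) (p q : Ptn) : AdjacentSeq (ed δ p) (ed δ q) ↔ YoungEdge p q := by
  unfold AdjacentSeq YoungEdge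
  rw [exists_or, ← addBox_tr_iff p q, ← addBox_tr_iff q p]
  simp only [← ed_add_iff δ]
  apply or_congr Iff.rfl
  apply exists_congr
  intro i
  rw [eq_sub_iff_add_eq, eq_comm]

theorem ed_dominant (δ : ℤ) (p : Ptn) : Dominant (ed δ p) := by
  intro i j hij
  have h1 : ((p.transpose j : ℕ) : ℚ) ≤ p.transpose i := by
    exact_mod_cast p.tr.antitone' i j hij.le
  have h2 : ((i : ℕ) : ℚ) < (j : ℕ) := by exact_mod_cast hij
  simp only [ed]
  linarith

theorem ed_injective (δ : ℤ) : Function.Injective fun p : Ptn => ed δ p := by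
  intro p q h
  rw [← p.tr_tr, ← q.tr_tr]
  congr 1
  apply Ptn.eq_of_toFun
  intro i
  have := congrFun h i
  simp only [ed] at this
  have h2 : ((p.transpose i : ℕ) : ℚ) = q.transpose i := by linarith
  exact_mod_cast h2

theorem ed_empty (δ : ℤ) : ed δ Ptn.empty = rhod δ := by
  funext i
  have : Ptn.empty.transpose i = 0 := by
    apply nat_eq_of_pnat_le
    intro k
    rw [Ptn.le_transpose_iff]
    simp [Ptn.empty]
  simp only [ed, rhod, this]
  push_cast
  ring

theorem InComponent.step {δ : ℤ} {x y : ℕ+ → ℚ} (hx : InComponent δ x)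
    (hy : Dominant y) (hxy : AdjacentSeq x y) : InComponent δ y := by
  obtain ⟨_, r, c, h0, hr, hd, ha⟩ := hx
  refine ⟨hy, r + 1, fun t => if t ≤ r then c t else y, by simpa using h0, by simp, ?_, ?_⟩
  · intro t _
    by_cases h : t ≤ r
    · simpa [h] using hd t h
    · simpa [h] using hy
  · intro t ht
    by_cases h : t < r
    · have h1 : t ≤ r := h.le
      have h2 : t + 1 ≤ r := h
      simpa [h1, h2] using ha t h
    · have h1 : t = r := by omega
      subst h1
      simpa [hr] using hxy

theorem ed_inComponent_aux (δ : ℤ) (N : ℕ+) (n : ℕ) : ∀ p : Ptn,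
    (∀ i, N ≤ i → p.toFun i = 0) → ∑ i ∈ Finset.Iio N, p.toFun i = n →
    InComponent δ (ed δ p) := by
  induction n using Nat.strong_induction_on with
  | _ n ih =>
    intro p hp hn
    rcases Nat.eq_zero_or_pos (p.transpose 1) with h0 | h0
    · have hz : p = Ptn.empty := by
        apply Ptn.eq_of_toFun
        intro i
        by_contra hne
        have := (p.le_transpose_iff 1 i).2 (Nat.one_le_iff_ne_zero.2 hne)
        have := i.pos
        omega
      rw [hz]
      refine ⟨ed_dominant δ _, 0, fun _ => rhod δ, rfl, (ed_empty δ).symm, ?_, by simp⟩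
      intro _ _
      rw [← ed_empty]
      exact ed_dominant δ _
    · set k : ℕ+ := ⟨p.transpose 1, h0⟩ with hk
      have hk1 : 1 ≤ p.toFun k := by simpa using (p.le_transpose_iff 1 k).1 le_rfl
      have hgt : ∀ j, k < j → p.toFun j = 0 := by
        intro j hj
        by_contra hne
        have h1 := (p.le_transpose_iff 1 j).2 (Nat.one_le_iff_ne_zero.2 hne)
        have h2 : p.transpose 1 < (j : ℕ) := hj
        omega
      have hkN : k < N := by
        by_contra hlt
        have := hp k (not_lt.mp hlt)
        omega
      let q : Ptn :=
        { toFun := fun j => if j = k then p.toFun k - 1 else p.toFun j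
          antitone' := by
            intro i j hij
            have hpij := p.antitone' i j hij
            by_cases hi : i = k
            · by_cases hj : j = k
              · simp [hi, hj]
              · have : k < j := lt_of_le_of_ne (hi ▸ hij) (Ne.symm hj)
                simp [hj, hgt j this]
            · by_cases hj : j = k
              · subst hj
                simp only [hi, if_true, if_false]
                omega
              · simpa [hi, hj] using hpij
          finite_support' := by
            refine ⟨N, fun i hi => ?_⟩
            have := (lt_of_lt_of_le hkN hi).ne'
            simp [this, hp i hi] }
      have hadd : AddBoxAt q p k := by
        refine ⟨?_, fun t ht => ?_⟩
        · simp only [q, if_true]; omega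
        · simp [q, ht]
      have hqN : ∀ i, N ≤ i → q.toFun i = 0 := by
        intro i hi
        have := (lt_of_lt_of_le hkN hi).ne'
        simp [q, this, hp i hi]
      have hlt : ∑ i ∈ Finset.Iio N, q.toFun i < n := by
        rw [← hn]
        apply Finset.sum_lt_sum
        · intro i _
          by_cases hi : i = k
          · subst hi; rw [hadd.1]; omega
          · exact (hadd.2 i hi).ge
        · exact ⟨k, by simpa using hkN, by rw [hadd.1]; omega⟩
      exact (ih _ hlt q hqN rfl).step (ed_dominant δ p)
        ((adj_iff δ q p).2 (Or.inl ⟨k, hadd⟩))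

theorem ed_inComponent (δ : ℤ) (p : Ptn) : InComponent δ (ed δ p) := by
  obtain ⟨N, hN⟩ := p.finite_support'
  exact ed_inComponent_aux δ N _ p hN rfl

theorem chain_form (δ : ℤ) (r : ℕ) (c : ℕ → ℕ+ → ℚ) (h0 : c 0 = rhod δ)
    (ha : ∀ t < r, AdjacentSeq (c t) (c (t + 1))) :
    ∀ t ≤ r, ∃ a : ℕ+ → ℤ, (∀ i, c t i = (a i : ℚ) - (δ : ℚ) / 2 - ((i : ℕ) : ℚ) + 1) ∧
      ∃ N : ℕ+, ∀ i, N ≤ i → a i = 0 := by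
  intro t
  induction t with
  | zero =>
    intro _
    refine ⟨fun _ => 0, fun i => ?_, 1, fun _ _ => rfl⟩
    rw [h0]
    simp only [rhod]
    push_cast
    ring
  | succ t ih =>
    intro ht
    obtain ⟨a, h1, N, hN⟩ := ih (by omega)
    have hsupp : ∀ i k : ℕ+, N + k ≤ i → N ≤ i ∧ i ≠ k := by
      intro i k h
      have h' : (N : ℕ) + k ≤ i := by exact_mod_cast h
      have := N.pos
      refine ⟨?_, fun e => ?_⟩
      · rw [← PNat.coe_le_coe]; omega
      · subst e; omega
    obtain ⟨k, hk | hk⟩ := ha t (by omega)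
    · refine ⟨fun i => a i + if i = k then 1 else 0, fun i => ?_, N + k, fun i hi => ?_⟩
      · rw [hk, Pi.add_apply, h1]
        simp only [eps]
        push_cast
        ring
      · obtain ⟨u, v⟩ := hsupp i k hi
        simp [v, hN i u]
    · refine ⟨fun i => a i - if i = k then 1 else 0, fun i => ?_, N + k, fun i hi => ?_⟩
      · rw [hk, Pi.sub_apply, h1]
        simp only [eps]
        push_cast
        ring
      · obtain ⟨u, v⟩ := hsupp i k hi
        simp [v, hN i u]

theorem ed_surj (δ : ℤ) (x : ℕ+ → ℚ) (hx : InComponent δ x) : ∃ p : Ptn, ed δ p = x := by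
  obtain ⟨hd, r, c, h0, hr, -, ha⟩ := hx
  obtain ⟨a, h1, N, hN⟩ := chain_form δ r c h0 ha r le_rfl
  rw [hr] at h1
  have hs : ∀ i : ℕ+, a (i + 1) ≤ a i := by
    intro i
    have h := hd i (i + 1) (PNat.lt_add_right i 1)
    rw [h1, h1, PNat.add_coe, PNat.one_coe] at h
    push_cast at h
    have h' : (a (i + 1) : ℚ) < (a i : ℚ) + 1 := by linarith
    have h'' : a (i + 1) < a i + 1 := by exact_mod_cast h'
    omega
  have hanti : ∀ i j : ℕ+, i ≤ j → a j ≤ a i := by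
    intro i j hij
    induction j using PNat.recOn with
    | one =>
      have : i = 1 := le_antisymm hij one_le
      rw [this]
    | succ j ih =>
      rcases hij.lt_or_eq with h | h
      · exact (hs j).trans (ih (PNat.lt_add_one_iff.1 h))
      · rw [h]
  have hnn : ∀ i, 0 ≤ a i := by
    intro i
    have h2 := hanti i (max i N) (le_max_left _ _)
    rwa [hN _ (le_max_right _ _)] at h2
  let p : Ptn :=
    { toFun := fun i => (a i).toNat
      antitone' := fun i j hij => Int.toNat_le_toNat (hanti i j hij)
      finite_support' := ⟨N, fun i hi => by simp [hN i hi]⟩ }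
  refine ⟨p.tr, ?_⟩
  funext i
  have e : p.tr.transpose i = p.toFun i := congrArg (fun s => Ptn.toFun s i) p.tr_tr
  have e2 : ((p.toFun i : ℕ) : ℤ) = a i := Int.toNat_of_nonneg (hnn i)
  have e3 : ((p.toFun i : ℕ) : ℚ) = (a i : ℚ) := by exact_mod_cast congrArg (Int.cast (R := ℚ)) e2
  rw [h1]
  simp only [ed]
  rw [e, e3]

/-- e_δ is a graph isomorphism from the Young graph onto the connected
component of ρ_δ in the dominant part of the lattice graph. -/
theorem stmt0 (δ : ℤ) :
    (∀ p : Ptn, InComponent δ (ed δ p)) ∧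
    (Function.Injective fun p : Ptn => ed δ p) ∧
    (∀ x : ℕ+ → ℚ, InComponent δ x → ∃ p : Ptn, ed δ p = x) ∧
    (∀ p q : Ptn, AdjacentSeq (ed δ p) (ed δ q) ↔ YoungEdge p q) := by
  exact ⟨ed_inComponent δ, ed_injective δ, ed_surj δ, adj_iff δ⟩
end

section
/- Let δ ∈ ℤ and let λ, μ be partitions such that μ is obtained from λ by adding one box. Then deg_δ(μ) equals deg_δ(λ), deg_δ(λ) + 1, or deg_δ(λ) − 1. -/
open Polynomial

theorem Ptn.finite_col (p : Ptn) (i : ℕ+) : {k : ℕ+ | (i : ℕ) ≤ p.toFun k}.Finite := by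
  obtain ⟨N, hN⟩ := p.finite_support'
  refine (Set.finite_Iio N).subset ?_
  intro k hk
  by_contra hc
  have h1 := hN k (not_lt.mp hc)
  have h2 : (i : ℕ) ≤ p.toFun k := hk
  have := i.pos
  omega

theorem ed_inj (δ : ℤ) (p : Ptn) : Function.Injective (ed δ p) := by
  have key : StrictAnti (ed δ p) := by
    intro i j hij
    have h1 : p.transpose j ≤ p.transpose i := by
      refine Set.ncard_le_ncard ?_ (p.finite_col i)
      intro k hk
      have h2 : (j : ℕ) ≤ p.toFun k := hk
      have h3 : (i : ℕ) < j := hij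
      show (i : ℕ) ≤ p.toFun k
      omega
    have h3 : (i : ℕ) < j := hij
    have h1' : (p.transpose j : ℚ) ≤ p.transpose i := by exact_mod_cast h1
    have h3' : ((i : ℕ) : ℚ) < ((j : ℕ) : ℚ) := by exact_mod_cast h3
    unfold ed
    linarith
  exact key.injective

/-- The pairs involving a fixed index form a subsingleton. -/
theorem pairs_subsingleton (e : ℕ+ → ℚ) (he : Function.Injective e) (c : ℕ+) :
    {x : ℕ+ × ℕ+ | (x.1 < x.2 ∧ e x.1 + e x.2 = 0) ∧ (x.1 = c ∨ x.2 = c)}.Subsingleton := by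
  rintro ⟨a, b⟩ ⟨⟨h1, h2⟩, h3⟩ ⟨a', b'⟩ ⟨⟨h1', h2'⟩, h3'⟩
  dsimp only at *
  rcases h3 with rfl | rfl <;> rcases h3' with rfl | rfl
  · rw [he (show e b = e b' by linarith)]
  · have := he (show e b = e a' by linarith)
    subst this
    exact absurd (h1.trans h1') (lt_irrefl _)
  · have := he (show e a = e b' by linarith)
    subst this
    exact absurd (h1.trans h1') (lt_irrefl _)
  · rw [he (show e a = e a' by linarith)]

theorem pairs_split (e : ℕ+ → ℚ) (he : Function.Injective e) (c : ℕ+)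
    (A : Set (ℕ+ × ℕ+))
    (hA : A = {x : ℕ+ × ℕ+ | (x.1 < x.2 ∧ e x.1 + e x.2 = 0) ∧ ¬ (x.1 = c ∨ x.2 = c)}) :
    (A.Infinite → Set.ncard {x : ℕ+ × ℕ+ | x.1 < x.2 ∧ e x.1 + e x.2 = 0} = 0) ∧
    (A.Finite → ∃ b ≤ 1,
      Set.ncard {x : ℕ+ × ℕ+ | x.1 < x.2 ∧ e x.1 + e x.2 = 0} = A.ncard + b) := by
  constructor
  · intro h
    refine (h.mono ?_).ncard
    rw [hA]
    exact fun x hx => hx.1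
  · intro h
    have hs := pairs_subsingleton e he c
    refine ⟨_, (Set.ncard_le_one hs.finite).2 (fun a ha b hb => hs ha hb), ?_⟩
    rw [← Set.ncard_union_eq ?_ h hs.finite]
    · congr 1
      ext x
      rw [hA]
      simp only [Set.mem_union, Set.mem_setOf_eq]
      tauto
    · rw [hA, Set.disjoint_left]
      exact fun x hx hx' => hx.2 hx'.2

theorem transpose_add (p q : Ptn) (k : ℕ+) (h : AddBoxAt p q k) (i : ℕ+)
    (hi : (i : ℕ) ≠ p.toFun k + 1) : q.transpose i = p.transpose i := by
  unfold Ptn.transpose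
  congr 1
  ext t
  simp only [Set.mem_setOf_eq]
  by_cases ht : t = k
  · subst ht
    rw [h.1]
    omega
  · rw [h.2 t ht]

/-- adding one box changes the δ-degree of singularity by 0, +1 or −1. -/
theorem stmt1 (δ : ℤ) (p q : Ptn) (h : ∃ k, AddBoxAt p q k) :
    degd δ q = degd δ p ∨ degd δ q = degd δ p + 1 ∨ degd δ q + 1 = degd δ p := by
  obtain ⟨k, hk⟩ := h
  let c : ℕ+ := ⟨p.toFun k + 1, Nat.succ_pos _⟩
  have heq : ∀ i : ℕ+, i ≠ c → ed δ q i = ed δ p i := by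
    intro i hi
    unfold ed
    rw [transpose_add p q k hk i (fun h => hi (PNat.eq h))]
  have hA : {x : ℕ+ × ℕ+ | (x.1 < x.2 ∧ ed δ p x.1 + ed δ p x.2 = 0) ∧ ¬ (x.1 = c ∨ x.2 = c)} =
      {x : ℕ+ × ℕ+ | (x.1 < x.2 ∧ ed δ q x.1 + ed δ q x.2 = 0) ∧ ¬ (x.1 = c ∨ x.2 = c)} := by
    ext x
    simp only [Set.mem_setOf_eq, not_or]
    refine and_congr_left ?_
    rintro ⟨h1, h2⟩
    rw [heq _ h1, heq _ h2]
  obtain ⟨p1, p2⟩ := pairs_split (ed δ p) (ed_inj δ p) c _ rfl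
  obtain ⟨q1, q2⟩ := pairs_split (ed δ q) (ed_inj δ q) c _ hA
  unfold degd
  rcases Set.finite_or_infinite {x : ℕ+ × ℕ+ | (x.1 < x.2 ∧ ed δ p x.1 + ed δ p x.2 = 0) ∧
    ¬ (x.1 = c ∨ x.2 = c)} with hf | hf
  · obtain ⟨b, hb, hb'⟩ := p2 hf
    obtain ⟨d, hd, hd'⟩ := q2 hf
    rw [hb', hd']
    omega
  · left
    rw [p1 hf, q1 hf]
end

section
/- Let δ ∈ ℤ and let λ, μ be partitions such that μ is obtained from λ by adding one box. Then there exists n₀ ∈ L such that for every vertex n ∈ L with n ≠ n₀ and n ≠ n₀ + 1, the label of n in the weight diagram x_λ equals the label of n in the weight diagram x_μ; that is, the weight diagrams x_λ and x_μ agree except possibly at two adjacent vertices. -/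
open Polynomial

theorem transpose_addBox (p q : Ptn) (k : ℕ+) (h : AddBoxAt p q k) (i : ℕ+) :
    q.transpose i = p.transpose i + if (i : ℕ) = p.toFun k + 1 then 1 else 0 := by
  obtain ⟨h1, h2⟩ := h
  unfold Ptn.transpose
  split_ifs with hi
  · have hset : {t : ℕ+ | (i : ℕ) ≤ q.toFun t} = insert k {t : ℕ+ | (i : ℕ) ≤ p.toFun t} := by
      ext t
      simp only [Set.mem_ofPred_eq, Set.mem_insert_iff]
      by_cases ht : t = k
      · subst ht; simp; omega
      · rw [h2 t ht]; simp [ht]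
    have hfin : {t : ℕ+ | (i : ℕ) ≤ p.toFun t}.Finite := by
      obtain ⟨N, hN⟩ := p.finite_support'
      refine (Set.finite_Iio N).subset ?_
      intro t ht
      simp only [Set.mem_ofPred_eq] at ht
      simp only [Set.mem_Iio]
      by_contra hc
      have := hN t (not_lt.mp hc)
      have := i.pos
      omega
    rw [hset, Set.ncard_insert_of_notMem _ hfin]
    simp only [Set.mem_ofPred_eq]
    omega
  · have hset : {t : ℕ+ | (i : ℕ) ≤ q.toFun t} = {t : ℕ+ | (i : ℕ) ≤ p.toFun t} := by
      ext t
      simp only [Set.mem_ofPred_eq]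
      by_cases ht : t = k
      · subst ht; omega
      · rw [h2 t ht]
    rw [hset]; rfl

theorem isCirc_iff (δ : ℤ) (p : Ptn) (n : ℚ) (hn : 0 ≤ n) :
    IsCirc δ p n ↔ ¬ ((∃ i, ed δ p i = n) ∨ ∃ i, ed δ p i = -n) := by
  unfold IsCirc
  rw [← exists_or, not_exists]
  refine forall_congr' fun i => not_congr ?_
  exact abs_eq hn

/-- the weight diagrams x_λ and x_μ agree except possibly at two adjacent
vertices n₀ and n₀ + 1 of L. -/
theorem stmt2 (δ : ℤ) (p q : Ptn) (h : ∃ k, AddBoxAt p q k) :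
    ∃ n₀ ∈ Lset δ, ∀ n ∈ Lset δ, n ≠ n₀ → n ≠ n₀ + 1 →
      ((IsCirc δ p n ↔ IsCirc δ q n) ∧ (IsTimes δ p n ↔ IsTimes δ q n) ∧
        (IsUp δ p n ↔ IsUp δ q n) ∧ (IsDown δ p n ↔ IsDown δ q n)) := by
  obtain ⟨k, hk⟩ := h
  have hT := transpose_addBox p q k hk
  let i0 : ℕ+ := ⟨p.toFun k + 1, Nat.succ_pos _⟩
  obtain ⟨a, ha⟩ : ∃ a, ed δ p i0 = a := ⟨_, rfl⟩
  have hqa : ed δ q i0 = a + 1 := by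
    rw [← ha]
    have h1 := hT i0
    rw [if_pos (by rfl)] at h1
    unfold ed
    rw [h1]; push_cast; ring
  have hne : ∀ i, i ≠ i0 → ed δ q i = ed δ p i := by
    intro i hi
    have h1 := hT i
    rw [if_neg (fun hc : (i : ℕ) = p.toFun k + 1 => hi (PNat.eq hc))] at h1
    unfold ed
    rw [h1]; simp
  have key : ∀ x, x ≠ a → x ≠ a + 1 → ((∃ i, ed δ p i = x) ↔ ∃ i, ed δ q i = x) := by
    intro x hx1 hx2
    refine exists_congr fun i => ?_
    by_cases hi : i = i0
    · rw [hi, ha, hqa]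
      exact ⟨fun h => absurd h.symm hx1, fun h => absurd h.symm hx2⟩
    · rw [hne i hi]
  obtain ⟨m, hm⟩ : ∃ m : ℤ, a + (δ : ℚ) / 2 = m := by
    refine ⟨p.transpose i0 - ((i0 : ℕ) : ℤ) + 1, ?_⟩
    rw [← ha]; unfold ed; push_cast; ring
  have main : ∀ n₀ ∈ Lset δ, (∀ n : ℚ, 0 ≤ n → n ≠ n₀ → n ≠ n₀ + 1 →
      n ≠ a ∧ n ≠ a + 1 ∧ -n ≠ a ∧ -n ≠ a + 1) →
      ∃ n₀ ∈ Lset δ, ∀ n ∈ Lset δ, n ≠ n₀ → n ≠ n₀ + 1 →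
      ((IsCirc δ p n ↔ IsCirc δ q n) ∧ (IsTimes δ p n ↔ IsTimes δ q n) ∧
        (IsUp δ p n ↔ IsUp δ q n) ∧ (IsDown δ p n ↔ IsDown δ q n)) := by
    intro n₀ h0 H
    refine ⟨n₀, h0, fun n hn h1 h2 => ?_⟩
    obtain ⟨g1, g2, g3, g4⟩ := H n hn.1 h1 h2
    have k1 := key n g1 g2
    have k2 := key (-n) g3 g4
    refine ⟨?_, ?_, ?_, ?_⟩
    · rw [isCirc_iff δ p n hn.1, isCirc_iff δ q n hn.1, k1, k2]
    · unfold IsTimes; rw [k1, k2]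
    · unfold IsUp; rw [k1, k2]
    · unfold IsDown; rw [k1, k2]
      refine or_congr Iff.rfl (and_congr_right fun hz => ?_)
      rw [hz] at k1
      exact k1
  rcases le_or_gt 0 a with h0 | h0
  · refine main a ⟨h0, m, hm⟩ fun n hn h1 h2 => ⟨h1, h2, fun h => h1 ?_, fun h => ?_⟩ <;> linarith
  rcases le_or_gt a (-1) with h3 | h3
  · refine main (-a - 1) ⟨by linarith, δ - m - 1, by push_cast; linarith⟩ fun n hn h1 h2 =>
      ⟨fun h => ?_, fun h => h1 ?_, fun h => h2 ?_, fun h => h1 ?_⟩ <;> linarith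
  · have ha2 : a = -1 / 2 := by
      have e1 : (δ : ℚ) < 2 * m + 2 := by linarith
      have e2 : (2 * m : ℚ) < δ := by linarith
      have e1' : δ < 2 * m + 2 := by exact_mod_cast e1
      have e2' : 2 * m < δ := by exact_mod_cast e2
      have e3 : δ = 2 * m + 1 := by omega
      rw [e3] at hm
      push_cast at hm
      linarith
    refine main (1 / 2) ⟨by norm_num, m + 1, by push_cast; linarith⟩ fun n hn h1 h2 =>
      ⟨fun h => ?_, fun h => h1 ?_, fun h => h1 ?_, fun h => ?_⟩ <;> linarith
end

section
/- Let δ ∈ ℤ and let λ be a partition. The map (i,j) ↦ e_δ(λ)_j is a well-defined bijection from the set {(i,j) ∈ ℕ² : 1 ≤ j < i, λ^T_i + λ^T_j − i − j + 2 = δ} onto the set of vertices of L labelled × in the weight diagram x_λ, i.e. onto {n ∈ L : n > 0 and both n and −n occur as entries of e_δ(λ)}. -/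
open Polynomial

theorem aux_transpose_anti (p : Ptn) (i j : ℕ+) (h : i < j) :
    p.transpose j ≤ p.transpose i := by
  unfold Ptn.transpose
  apply Set.ncard_le_ncard
  · intro k hk
    have h' : (i : ℕ) < (j : ℕ) := h
    simp only [Set.mem_setOf_eq] at hk ⊢
    omega
  · obtain ⟨N, hN⟩ := p.finite_support'
    apply (Set.finite_Iio N).subset
    intro k hk
    simp only [Set.mem_setOf_eq] at hk
    by_contra hlt
    have h0 := hN k (not_lt.mp hlt)
    have := i.pos
    omega

theorem aux_ed_lt (δ : ℤ) (p : Ptn) : StrictAnti (ed δ p) := by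
  intro i j h
  have h1 : (p.transpose j : ℚ) ≤ p.transpose i := by
    exact_mod_cast aux_transpose_anti p i j h
  have h2 : ((i : ℕ) : ℚ) < ((j : ℕ) : ℚ) := by exact_mod_cast h
  unfold ed
  linarith

theorem aux_sum (δ : ℤ) (p : Ptn) (i j : ℕ+) :
    ((p.transpose i : ℤ) + (p.transpose j : ℤ)
          - ((i : ℕ) : ℤ) - ((j : ℕ) : ℤ) + 2 = δ) ↔ ed δ p i = - ed δ p j := by
  rw [← @Int.cast_inj ℚ]
  unfold ed
  push_cast
  constructor <;> intro h <;> linarith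

/-- (i,j) ↦ e_δ(λ)_j is a bijection from
{(i,j) : 1 ≤ j < i, λ^T_i + λ^T_j − i − j + 2 = δ} onto the ×'s of x_λ. -/
theorem stmt4 (δ : ℤ) (p : Ptn) :
    Set.BijOn (fun q : ℕ+ × ℕ+ => ed δ p q.2)
      {q : ℕ+ × ℕ+ | q.2 < q.1 ∧
        (p.transpose q.1 : ℤ) + (p.transpose q.2 : ℤ)
          - ((q.1 : ℕ) : ℤ) - ((q.2 : ℕ) : ℤ) + 2 = δ}
      {n : ℚ | n ∈ Lset δ ∧ 0 < n ∧
        (∃ i : ℕ+, ed δ p i = n) ∧ (∃ i : ℕ+, ed δ p i = -n)} := by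
  have anti := aux_ed_lt δ p
  refine ⟨?_, ?_, ?_⟩
  · rintro ⟨i, j⟩ ⟨hlt, hs⟩
    have hs' := (aux_sum δ p i j).mp hs
    have hl : ed δ p i < ed δ p j := anti hlt
    have hpos : 0 < ed δ p j := by linarith
    refine ⟨⟨hpos.le, (p.transpose j : ℤ) - ((j : ℕ) : ℤ) + 1, ?_⟩, hpos, ⟨j, rfl⟩, ⟨i, hs'⟩⟩
    simp only [ed]
    push_cast
    ring
  · rintro ⟨i, j⟩ ⟨_, hs⟩ ⟨i', j'⟩ ⟨_, hs'⟩ heq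
    have h1 := (aux_sum δ p i j).mp hs
    have h2 := (aux_sum δ p i' j').mp hs'
    have heq' : ed δ p j = ed δ p j' := heq
    have hj : j = j' := anti.injective heq'
    have hi : i = i' := anti.injective (by rw [h1, h2, heq'])
    rw [hi, hj]
  · rintro n ⟨_, hpos, ⟨j, hj⟩, ⟨i, hi⟩⟩
    refine ⟨(i, j), ⟨?_, (aux_sum δ p i j).mpr (by rw [hi, hj])⟩, hj⟩
    apply anti.lt_iff_gt.mp
    change ed δ p i < ed δ p j
    linarith
end

section
/- Let δ ∈ ℤ, m := ⌊δ/2⌋, and set T := m − 1 if δ is even and T := m if δ is odd. Let λ be a partition and let (i,j) satisfy 1 ≤ i ≤ j and −λ_i − λ_j + i + j = δ; put n := λ_i − i + δ/2 (a vertex of L labelled ∘ in x_λ). Then (i,j) belongs to the Young diagram [λ] (equivalently j ≤ λ_i) if and only if #{n' ∈ L : n' < n and n' is labelled × in x_λ} − #{n' ∈ L : n' < n and n' is labelled ∘ in x_λ} > T. -/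
open Polynomial

lemma aux_transpose (p : Ptn) (k l : ℕ+) : (k : ℕ) ≤ p.transpose l ↔ (l : ℕ) ≤ p.toFun k := by
  obtain ⟨N, hN⟩ := p.finite_support'
  have hfin : {k : ℕ+ | (l : ℕ) ≤ p.toFun k}.Finite := by
    apply (Set.finite_Iio N).subset
    intro x hx
    simp only [Set.mem_setOf_eq, Set.mem_Iio] at *
    by_contra h
    have h1 := hN x (not_lt.mp h)
    have h2 := l.pos
    omega
  constructor
  · intro h
    by_contra hl
    have hsub : {k : ℕ+ | (l : ℕ) ≤ p.toFun k} ⊆ ((Finset.Ico 1 k : Finset ℕ+) : Set ℕ+) := by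
      intro x hx
      simp only [Set.mem_setOf_eq, Finset.coe_Ico, Set.mem_Ico] at *
      refine ⟨PNat.one_le x, ?_⟩
      by_contra h'
      have := p.antitone' k x (not_lt.mp h')
      omega
    have h1 := Set.ncard_le_ncard hsub (Finset.finite_toSet _)
    rw [Set.ncard_coe_finset, PNat.card_Ico] at h1
    have h2 := k.pos
    unfold Ptn.transpose at h
    simp only [PNat.one_coe] at h1
    omega
  · intro h
    have hsub : ((Finset.Icc 1 k : Finset ℕ+) : Set ℕ+) ⊆ {k : ℕ+ | (l : ℕ) ≤ p.toFun k} := by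
      intro x hx
      simp only [Set.mem_setOf_eq, Finset.coe_Icc, Set.mem_Icc] at *
      exact h.trans (p.antitone' x k hx.2)
    have h1 := Set.ncard_le_ncard hsub hfin
    rw [Set.ncard_coe_finset, PNat.card_Icc] at h1
    unfold Ptn.transpose
    simp only [PNat.one_coe] at h1
    omega

/-- The integer-shifted set of entries. -/
def auxE (p : Ptn) (x : ℤ) : Prop := ∃ l : ℕ+, x = (p.transpose l : ℤ) - ((l : ℕ) : ℤ) + 1

lemma aux_compl (p : Ptn) (x : ℤ) :
    ¬ auxE p x ↔ ∃ k : ℕ+, x = ((k : ℕ) : ℤ) - (p.toFun k : ℤ) := by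
  constructor
  · intro hx
    have hex : ∃ k : ℕ, 0 < k ∧ ∀ h : 0 < k, x ≤ (k : ℤ) - (p.toFun ⟨k, h⟩ : ℤ) := by
      refine ⟨x.toNat + p.toFun 1 + 1, by omega, fun h => ?_⟩
      have := p.antitone' 1 ⟨x.toNat + p.toFun 1 + 1, h⟩ (PNat.one_le _)
      push_cast
      omega
    classical
    obtain ⟨hk, hk2⟩ := Nat.find_spec hex
    have hmin := fun k => @Nat.find_min _ _ hex k
    generalize Nat.find hex = k at *
    have hk2 := hk2 hk
    refine ⟨⟨k, hk⟩, ?_⟩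
    by_contra hne
    simp only [PNat.mk_coe] at hne
    apply hx
    have hlpos : 0 < ((k : ℤ) - x).toNat := by omega
    refine ⟨⟨((k : ℤ) - x).toNat, hlpos⟩, ?_⟩
    have h1 := aux_transpose p ⟨k, hk⟩ ⟨((k : ℤ) - x).toNat, hlpos⟩
    simp only [PNat.mk_coe] at h1 ⊢
    have h3 : k - 1 ≤ p.transpose ⟨((k : ℤ) - x).toNat, hlpos⟩ := by
      by_cases hk1 : k = 1
      · omega
      have hk0 : 0 < k - 1 := by omega
      have h2 := aux_transpose p ⟨k - 1, hk0⟩ ⟨((k : ℤ) - x).toNat, hlpos⟩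
      simp only [PNat.mk_coe] at h2
      rw [h2]
      by_contra hc
      apply hmin (k - 1) (by omega)
      refine ⟨hk0, fun h => ?_⟩
      omega
    omega
  · rintro ⟨k, hk⟩ ⟨l, hl⟩
    have := aux_transpose p k l
    omega

lemma aux_strict (p : Ptn) : StrictMono (fun k : ℕ+ => ((k : ℕ) : ℤ) - (p.toFun k : ℤ)) := by
  intro a b hab
  have := p.antitone' a b hab.le
  have h : (a : ℕ) < b := hab
  simp only
  omega

open Classical in
lemma aux_count (p : Ptn) (i j : ℕ+) (hij : i < j) :
    ∑ x ∈ Finset.Ioo (((i : ℕ) : ℤ) - (p.toFun i : ℤ)) (((j : ℕ) : ℤ) - (p.toFun j : ℤ)),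
      (if auxE p x then (1 : ℤ) else 0) =
    (((j : ℕ) : ℤ) - (p.toFun j : ℤ)) - (((i : ℕ) : ℤ) - (p.toFun i : ℤ))
      - ((j : ℕ) : ℤ) + ((i : ℕ) : ℤ) := by
  have hs := aux_strict p
  have hlt := hs hij
  simp only at hlt
  set a := ((i : ℕ) : ℤ) - (p.toFun i : ℤ) with ha
  set b := ((j : ℕ) : ℤ) - (p.toFun j : ℤ) with hb
  have hc : (Finset.Ioo a b).filter (fun x => ¬ auxE p x) =
      (Finset.Ioo i j).image (fun k : ℕ+ => ((k : ℕ) : ℤ) - (p.toFun k : ℤ)) := by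
    ext x
    simp only [Finset.mem_filter, Finset.mem_Ioo, Finset.mem_image, aux_compl]
    constructor
    · rintro ⟨⟨h1, h2⟩, k, rfl⟩
      exact ⟨k, ⟨hs.lt_iff_lt.mp h1, hs.lt_iff_lt.mp h2⟩, rfl⟩
    · rintro ⟨k, ⟨h1, h2⟩, rfl⟩
      exact ⟨⟨hs h1, hs h2⟩, k, rfl⟩
  have hcard : ((Finset.Ioo a b).filter (fun x => ¬ auxE p x)).card = (j : ℕ) - i - 1 := by
    rw [hc, Finset.card_image_of_injective _ hs.injective, PNat.card_Ioo]
  have htot := Finset.card_filter_add_card_filter_not (s := Finset.Ioo a b) (fun x => auxE p x)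
  rw [Int.card_Ioo] at htot
  rw [Finset.sum_boole]
  have : (i : ℕ) < j := hij
  omega

lemma aux_image (c b δ : ℤ) (P : ℚ → Prop) (Q : ℤ → Prop) [DecidablePred Q]
    (hc : ∀ x : ℤ, c ≤ x ↔ δ ≤ 2 * x)
    (hPQ : ∀ x : ℤ, δ ≤ 2 * x → (P ((x : ℚ) - (δ : ℚ) / 2) ↔ Q x)) :
    Set.ncard {n' : ℚ | n' ∈ Lset δ ∧ n' < (b : ℚ) - (δ : ℚ) / 2 ∧ P n'}
      = ((Finset.Ico c b).filter Q).card := by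
  have : {n' : ℚ | n' ∈ Lset δ ∧ n' < (b : ℚ) - (δ : ℚ) / 2 ∧ P n'}
      = (fun x : ℤ => (x : ℚ) - (δ : ℚ) / 2) '' (((Finset.Ico c b).filter Q : Finset ℤ) : Set ℤ) := by
    ext n
    simp only [Set.mem_setOf_eq, Set.mem_image, Finset.coe_filter, Finset.mem_Ico, Lset]
    constructor
    · rintro ⟨⟨h0, x, hx⟩, hb, hP⟩
      have hn : n = (x : ℚ) - (δ : ℚ) / 2 := by linarith
      subst hn
      have h2 : δ ≤ 2 * x := by
        have : (δ : ℚ) ≤ 2 * x := by linarith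
        exact_mod_cast this
      have h3 : x < b := by
        have : (x : ℚ) < b := by linarith
        exact_mod_cast this
      exact ⟨x, ⟨⟨(hc x).2 h2, h3⟩, (hPQ x h2).1 hP⟩, rfl⟩
    · rintro ⟨x, ⟨⟨h1, h2⟩, h3⟩, rfl⟩
      have h4 := (hc x).1 h1
      have h5 : (δ : ℚ) ≤ 2 * x := by exact_mod_cast h4
      have h6 : (x : ℚ) < b := by exact_mod_cast h2
      exact ⟨⟨by linarith, x, by ring⟩, by linarith, (hPQ x h4).2 h3⟩
  rw [this, Set.ncard_image_of_injective, Set.ncard_coe_finset]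
  intro x y h
  simpa using h

lemma aux_ed (δ : ℤ) (p : Ptn) (x : ℤ) :
    (∃ l : ℕ+, ed δ p l = (x : ℚ) - (δ : ℚ) / 2) ↔ auxE p x := by
  unfold auxE ed
  refine exists_congr fun l => ?_
  constructor
  · intro h
    have : (x : ℚ) = (p.transpose l : ℚ) - ((l : ℕ) : ℚ) + 1 := by linarith
    exact_mod_cast this
  · intro h
    rw [h]; push_cast; ring

lemma aux_ed_neg (δ : ℤ) (p : Ptn) (x : ℤ) :
    (∃ l : ℕ+, ed δ p l = -((x : ℚ) - (δ : ℚ) / 2)) ↔ auxE p (δ - x) := by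
  rw [← aux_ed δ]
  refine exists_congr fun l => ?_
  push_cast
  constructor <;> intro h <;> linarith

lemma aux_times (δ : ℤ) (p : Ptn) (x : ℤ) :
    IsTimes δ p ((x : ℚ) - (δ : ℚ) / 2) ↔ δ < 2 * x ∧ auxE p x ∧ auxE p (δ - x) := by
  unfold IsTimes
  rw [aux_ed, aux_ed_neg]
  refine and_congr_left fun _ => ?_
  constructor
  · intro h
    have : (δ : ℚ) < 2 * x := by linarith
    exact_mod_cast this
  · intro h
    have : (δ : ℚ) < 2 * x := by exact_mod_cast h
    linarith

lemma aux_circ (δ : ℤ) (p : Ptn) (x : ℤ) (hx : δ ≤ 2 * x) :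
    IsCirc δ p ((x : ℚ) - (δ : ℚ) / 2) ↔ ¬ auxE p x ∧ ¬ auxE p (δ - x) := by
  unfold IsCirc
  rw [← aux_ed δ p x, ← aux_ed_neg, ← not_or, ← exists_or, not_exists]
  have : (δ : ℚ) ≤ 2 * x := by exact_mod_cast hx
  refine forall_congr' fun l => ?_
  rw [Ne, abs_eq (by linarith)]

open Classical in
lemma aux_sum_s7 (δ m c a b : ℤ) (p : Ptn)
    (hm : (δ = 2 * m ∧ c = m) ∨ (δ = 2 * m + 1 ∧ c = m + 1)) (hab : a + b = δ) (hlt : a < b) :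
    (((Finset.Ico c b).filter (fun x => δ < 2 * x ∧ auxE p x ∧ auxE p (δ - x))).card : ℤ)
      - (((Finset.Ico c b).filter (fun x => ¬ auxE p x ∧ ¬ auxE p (δ - x))).card : ℤ)
    = ∑ x ∈ Finset.Ioo a b, (if auxE p x then (1 : ℤ) else 0) - (b - c) := by
  have hsplit : ∑ x ∈ Finset.Ioo a b, (if auxE p x then (1 : ℤ) else 0)
      = ∑ x ∈ Finset.Ico c b, (if auxE p x then (1 : ℤ) else 0)
        + ∑ x ∈ Finset.Ioo a c, (if auxE p x then (1 : ℤ) else 0) := by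
    rw [← Finset.sum_union]
    · congr 1
      ext x
      simp only [Finset.mem_union, Finset.mem_Ioo, Finset.mem_Ico]
      omega
    · rw [Finset.disjoint_left]
      intro x
      simp only [Finset.mem_Ioo, Finset.mem_Ico]
      omega
  have hrefl : ∑ x ∈ Finset.Ioo a c, (if auxE p x then (1 : ℤ) else 0)
      = ∑ x ∈ (Finset.Ico c b).filter (fun x => δ < 2 * x),
          (if auxE p (δ - x) then (1 : ℤ) else 0) := by
    refine Finset.sum_nbij' (fun x => δ - x) (fun x => δ - x) ?_ ?_ ?_ ?_ ?_
    · intro x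
      simp only [Finset.mem_Ioo, Finset.mem_filter, Finset.mem_Ico]
      omega
    · intro x
      simp only [Finset.mem_Ioo, Finset.mem_filter, Finset.mem_Ico]
      omega
    · intro x _; ring
    · intro x _; ring
    · intro x _
      simp
  have hone : (b - c) = ∑ x ∈ Finset.Ico c b, (1 : ℤ) := by
    simp only [Finset.sum_const, Int.card_Ico, nsmul_eq_mul, mul_one]
    omega
  rw [hsplit, hrefl, hone, Finset.sum_filter, ← Finset.sum_add_distrib, ← Finset.sum_sub_distrib,
    Finset.card_filter, Finset.card_filter]
  push_cast
  rw [← Finset.sum_sub_distrib]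
  refine Finset.sum_congr rfl fun x hx => ?_
  rw [Finset.mem_Ico] at hx
  by_cases h1 : δ < 2 * x
  · by_cases h2 : auxE p x <;> by_cases h3 : auxE p (δ - x) <;> simp [h1, h2, h3]
  · have h4 : δ - x = x := by omega
    rw [h4]
    by_cases h2 : auxE p x <;> simp [h1, h2]

/-- for a ∘ of x_λ coming from the pair (i,j) (with i ≤ j and
−λ_i − λ_j + i + j = δ), the box (i,j) lies in [λ] iff
#(×'s left of n) − #(∘'s left of n) > T, where n = λ_i − i + δ/2. -/
theorem stmt7 (δ m T : ℤ) (hmT : (δ = 2 * m ∧ T = m - 1) ∨ (δ = 2 * m + 1 ∧ T = m))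
    (p : Ptn) (i j : ℕ+) (hij : i ≤ j)
    (hd : -(p.toFun i : ℤ) - (p.toFun j : ℤ) + ((i : ℕ) : ℤ) + ((j : ℕ) : ℤ) = δ) :
    ((j : ℕ) ≤ p.toFun i) ↔
      T < (Set.ncard {n' : ℚ | n' ∈ Lset δ ∧
              n' < (p.toFun i : ℚ) - ((i : ℕ) : ℚ) + (δ : ℚ) / 2 ∧ IsTimes δ p n'} : ℤ)
          - (Set.ncard {n' : ℚ | n' ∈ Lset δ ∧
              n' < (p.toFun i : ℚ) - ((i : ℕ) : ℚ) + (δ : ℚ) / 2 ∧ IsCirc δ p n'} : ℤ) := by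
  classical
  obtain ⟨c, hm⟩ : ∃ c : ℤ, (δ = 2 * m ∧ c = m) ∨ (δ = 2 * m + 1 ∧ c = m + 1) := by
    rcases hmT with h | h
    · exact ⟨m, Or.inl ⟨h.1, rfl⟩⟩
    · exact ⟨m + 1, Or.inr ⟨h.1, rfl⟩⟩
  have hbq : (p.toFun i : ℚ) - ((i : ℕ) : ℚ) + (δ : ℚ) / 2
      = ((((j : ℕ) : ℤ) - (p.toFun j : ℤ) : ℤ) : ℚ) - (δ : ℚ) / 2 := by
    rw [← hd]; push_cast; ring
  have hc : ∀ x : ℤ, c ≤ x ↔ δ ≤ 2 * x := by intro x; omega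
  rw [hbq, aux_image c _ δ (IsTimes δ p) _ hc (fun x _ => aux_times δ p x),
    aux_image c _ δ (IsCirc δ p) _ hc (fun x hx => aux_circ δ p x hx)]
  rcases hij.eq_or_lt with h | h
  · subst h
    rw [Finset.Ico_eq_empty (by omega)]
    simp only [Finset.filter_empty, Finset.card_empty]
    omega
  · have hs := aux_strict p h
    simp only at hs
    rw [aux_sum_s7 δ m c (((i : ℕ) : ℤ) - (p.toFun i : ℤ)) _ p hm (by omega) hs, aux_count p i j h]
    omega
end

section
/- Let δ ∈ ℤ and let λ be a partition. The King polynomial P_λ(u) = ∏_{(i,j)∈[λ]} (u − 1 + d(i,j))/h(i,j) is a nonzero polynomial in ℚ[u], and the multiplicity of δ as a root of P_λ (the largest k such that (u − δ)^k divides P_λ(u)) equals deg_δ(λ) − deg_δ(∅). -/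
open Polynomial

section KingAux

def av (p : Ptn) (i : ℕ+) : ℤ := (p.toFun i : ℤ) - ((i : ℕ) : ℤ)
noncomputable def cv (p : Ptn) (i : ℕ+) : ℤ := ((i : ℕ) : ℤ) - 1 - (p.transpose i : ℤ)

lemma exists_pnat (n : ℕ) (h : 0 < n) : ∃ k : ℕ+, (k : ℕ) = n := ⟨⟨n, h⟩, rfl⟩

lemma col_finite (p : Ptn) (j : ℕ+) : {k : ℕ+ | (j : ℕ) ≤ p.toFun k}.Finite := by
  obtain ⟨N, hN⟩ := p.finite_support'
  refine (Set.finite_Iio N).subset ?_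
  intro k hk
  simp only [Set.mem_ofPred_eq] at hk
  simp only [Set.mem_Iio]
  by_contra h
  have := hN k (not_lt.mp h)
  have := j.pos
  omega

lemma box_iff (p : Ptn) (i j : ℕ+) : (j : ℕ) ≤ p.toFun i ↔ (i : ℕ) ≤ p.transpose j := by
  have hc : (Set.Iic i).ncard = (i : ℕ) := by
    rw [← Finset.coe_Iic, Set.ncard_coe_finset]
    have : Finset.Iic i = Finset.Icc 1 i := by ext; simp
    rw [this, PNat.card_Icc]; simp
  have hd : (Set.Iio i).ncard = (i : ℕ) - 1 := by
    rw [← Finset.coe_Iio, Set.ncard_coe_finset]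
    have : Finset.Iio i = Finset.Ico 1 i := by ext; simp
    rw [this, PNat.card_Ico]; simp
  constructor
  · intro h
    rw [← hc]
    refine Set.ncard_le_ncard ?_ (col_finite p j)
    intro k hk
    exact h.trans (p.antitone' k i hk)
  · intro h
    by_contra h'
    have : p.transpose j ≤ (i : ℕ) - 1 := by
      rw [← hd]
      refine Set.ncard_le_ncard ?_ (Set.finite_Iio i)
      intro k hk
      simp only [Set.mem_ofPred_eq] at hk
      by_contra h2
      have := p.antitone' i k (not_lt.mp h2)
      omega
    have := i.pos
    omega

lemma av_anti (p : Ptn) : StrictAnti (av p) := by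
  intro i j h
  have := p.antitone' i j h.le
  have h' : (i : ℕ) < j := h
  unfold av; omega

lemma tr_anti (p : Ptn) (i j : ℕ+) (h : i ≤ j) : p.transpose j ≤ p.transpose i := by
  refine Set.ncard_le_ncard ?_ (col_finite p i)
  intro k hk
  have h' : (i : ℕ) ≤ j := h
  simp only [Set.mem_ofPred_eq] at *
  omega

lemma cv_mono (p : Ptn) : StrictMono (cv p) := by
  intro i j h
  have := tr_anti p i j h.le
  have h' : (i : ℕ) < j := h
  unfold cv; omega

lemma av_ne_cv (p : Ptn) (i j : ℕ+) : av p i ≠ cv p j := by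
  have := box_iff p i j
  unfold av cv; omega

lemma cover (p : Ptn) (x : ℤ) : (∃ i, av p i = x) ∨ (∃ j, cv p j = x) := by
  classical
  obtain ⟨N, hN⟩ := p.finite_support'
  have hex : ∃ i : ℕ+, av p i ≤ x := by
    obtain ⟨k, hk⟩ := exists_pnat ((N : ℕ) + x.natAbs) (by have := N.pos; omega)
    have hNk : N ≤ k := by rw [← PNat.coe_le_coe]; omega
    have h0 := hN k hNk
    refine ⟨k, ?_⟩
    unfold av
    omega
  obtain ⟨i, hi, hmin⟩ : ∃ i : ℕ+, av p i ≤ x ∧ ∀ k < i, ¬ av p k ≤ x :=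
    ⟨PNat.find hex, PNat.find_spec hex, fun k hk => PNat.find_min hex hk⟩
  rcases hi.eq_or_lt with h | h
  · exact Or.inl ⟨i, h⟩
  right
  have hj : 0 < x + (i : ℕ) := by unfold av at h; omega
  refine ⟨⟨(x + (i : ℕ)).toNat, by omega⟩, ?_⟩
  set j : ℕ+ := ⟨(x + (i : ℕ)).toNat, by omega⟩ with hjd
  have hjv : ((j : ℕ) : ℤ) = x + (i : ℕ) := by
    rw [hjd]; simp only [PNat.mk_coe]; omega
  have h1 := box_iff p i j
  unfold av at h
  have ht : p.transpose j = (i : ℕ) - 1 := by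
    by_cases hi1 : i = 1
    · subst hi1
      simp at *
      omega
    · have hi2 : 1 < (i : ℕ) := by
        have : (1 : ℕ+) < i := lt_of_le_of_ne (PNat.one_le i) (Ne.symm hi1)
        exact this
      obtain ⟨k, hkv⟩ := exists_pnat ((i : ℕ) - 1) (by omega)
      have hk : k < i := by
        rw [← PNat.coe_lt_coe]; omega
      have h2 := hmin _ hk
      have h3 := box_iff p k j
      unfold av at h2
      omega
  have := i.pos
  unfold cv
  omega

open Classical in
noncomputable def GG (p : Ptn) (s x : ℤ) : ℤ :=
  (((Finset.Ioo (s - x) x).filter (fun y => ∃ i, av p i = y)).card : ℤ)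

lemma GG_a (p : Ptn) (s x : ℤ) (i j : ℕ+) (h : i < j) (hi : av p i = x) (hj : av p j = s - x) :
    GG p s x = (j : ℕ) - (i : ℕ) - 1 := by
  classical
  have : (Finset.Ioo (s - x) x).filter (fun y => ∃ i, av p i = y)
      = (Finset.Ioo i j).image (av p) := by
    ext y
    simp only [Finset.mem_filter, Finset.mem_Ioo, Finset.mem_image]
    constructor
    · rintro ⟨⟨h1, h2⟩, k, rfl⟩
      rw [← hj] at h1; rw [← hi] at h2
      exact ⟨k, ⟨(av_anti p).lt_iff_gt.mp h2, (av_anti p).lt_iff_gt.mp h1⟩, rfl⟩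
    · rintro ⟨k, ⟨h1, h2⟩, rfl⟩
      rw [← hj, ← hi]
      exact ⟨⟨av_anti p h2, av_anti p h1⟩, k, rfl⟩
  unfold GG
  rw [this, Finset.card_image_of_injective _ (av_anti p).injective, PNat.card_Ioo]
  have h' : (i : ℕ) < j := h
  omega

lemma GG_c (p : Ptn) (s x : ℤ) (i j : ℕ+) (h : i < j) (hi : cv p i = s - x) (hj : cv p j = x) :
    GG p s x = 2 * x - s - (j : ℕ) + (i : ℕ) := by
  classical
  have : (Finset.Ioo (s - x) x).filter (fun y => ¬ ∃ i, av p i = y)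
      = (Finset.Ioo i j).image (cv p) := by
    ext y
    simp only [Finset.mem_filter, Finset.mem_Ioo, Finset.mem_image]
    constructor
    · rintro ⟨⟨h1, h2⟩, hk⟩
      obtain ⟨k, rfl⟩ := (cover p y).resolve_left hk
      rw [← hi] at h1; rw [← hj] at h2
      exact ⟨k, ⟨(cv_mono p).lt_iff_lt.mp h1, (cv_mono p).lt_iff_lt.mp h2⟩, rfl⟩
    · rintro ⟨k, ⟨h1, h2⟩, rfl⟩
      have g1 := cv_mono p h1
      have g2 := cv_mono p h2
      refine ⟨⟨by omega, by omega⟩, ?_⟩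
      rintro ⟨l, hl⟩
      exact av_ne_cv p l k hl
  have h2 := Finset.card_filter_add_card_filter_not (s := Finset.Ioo (s - x) x)
    (fun y => ∃ i, av p i = y)
  rw [this, Finset.card_image_of_injective _ (cv_mono p).injective, PNat.card_Ioo,
    Int.card_Ioo] at h2
  have h' : (i : ℕ) < j := h
  have h3 := cv_mono p h
  unfold GG
  omega

open Classical in
lemma GG_succ (p : Ptn) (s x : ℤ) (h : s < 2 * x) :
    GG p s (x + 1) = GG p s x + (if ∃ i, av p i = x then 1 else 0)
      + (if ∃ i, av p i = s - x then 1 else 0) := by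
  unfold GG
  have : Finset.Ioo (s - (x + 1)) (x + 1) = insert x (insert (s - x) (Finset.Ioo (s - x) x)) := by
    ext y; simp only [Finset.mem_Ioo, Finset.mem_insert]; omega
  rw [this, Finset.filter_insert, Finset.filter_insert]
  have h1 : s - x ∉ (Finset.Ioo (s - x) x).filter (fun y => ∃ i, av p i = y) := by simp
  have h2 : x ∉ (Finset.Ioo (s - x) x).filter (fun y => ∃ i, av p i = y) := by simp
  have h3 : x ∉ insert (s - x) ((Finset.Ioo (s - x) x).filter (fun y => ∃ i, av p i = y)) := by
    simp only [Finset.mem_insert, not_or]; exact ⟨by omega, h2⟩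
  split_ifs with ha hb hb
  · rw [Finset.card_insert_of_notMem h3, Finset.card_insert_of_notMem h1]; push_cast; ring
  · rw [Finset.card_insert_of_notMem h2]; push_cast; ring
  · rw [Finset.card_insert_of_notMem h1]; push_cast; ring
  · push_cast; ring

def UU (p : Ptn) (s : ℤ) : Set ℤ :=
  {x | s < 2 * x ∧ (∃ i, av p i = x) ∧ (∃ i, av p i = s - x) ∧ GG p s x + 1 ≤ x}
def WW (p : Ptn) (s : ℤ) : Set ℤ :=
  {x | s < 2 * x ∧ (∃ i, cv p i = x) ∧ (∃ i, cv p i = s - x) ∧ GG p s x ≤ x}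

lemma c_iff (p : Ptn) (x : ℤ) : (∃ i, cv p i = x) ↔ ¬ ∃ i, av p i = x := by
  constructor
  · rintro ⟨i, rfl⟩ ⟨j, hj⟩
    exact av_ne_cv p j i hj
  · exact fun h => (cover p x).resolve_left h

open Classical in
lemma telescope (p : Ptn) (s x0 : ℤ) (h0 : s < 2 * x0) (M : ℤ) (hM : x0 ≤ M) :
    (((Finset.Ico x0 M).filter (· ∈ WW p s)).card : ℤ)
      - (((Finset.Ico x0 M).filter (· ∈ UU p s)).card : ℤ)
      = max (M - GG p s M) 0 - max (x0 - GG p s x0) 0 := by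
  induction M, hM using Int.le_induction with
  | base => simp
  | succ n hn ih =>
    have hI : Finset.Ico x0 (n + 1) = insert n (Finset.Ico x0 n) := by
      ext y; simp only [Finset.mem_Ico, Finset.mem_insert]; omega
    have hs := GG_succ p s n (by omega)
    have hw : n ∉ (Finset.Ico x0 n).filter (· ∈ WW p s) := by simp
    have hu : n ∉ (Finset.Ico x0 n).filter (· ∈ UU p s) := by simp
    have hW : n ∈ WW p s ↔ (¬ ∃ i, av p i = n) ∧ (¬ ∃ i, av p i = s - n) ∧ GG p s n ≤ n := by
      unfold WW
      rw [Set.mem_ofPred_eq, c_iff, c_iff]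
      exact ⟨fun h => h.2, fun h => ⟨by omega, h⟩⟩
    have hU : n ∈ UU p s ↔ (∃ i, av p i = n) ∧ (∃ i, av p i = s - n) ∧ GG p s n + 1 ≤ n := by
      unfold UU
      rw [Set.mem_ofPred_eq]
      exact ⟨fun h => h.2, fun h => ⟨by omega, h⟩⟩
    rw [hI, Finset.filter_insert, Finset.filter_insert]
    by_cases hA : ∃ i, av p i = n <;> by_cases hB : ∃ i, av p i = s - n <;>
      simp only [hA, hB, not_true_eq_false, not_false_eq_true, true_and, false_and, if_true,
        if_false] at hs hW hU <;>
      by_cases hw' : n ∈ WW p s <;> by_cases hu' : n ∈ UU p s <;>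
      simp only [hw', hu', if_true, if_false, Finset.card_insert_of_notMem hw,
        Finset.card_insert_of_notMem hu, true_iff, false_iff] at * <;>
      push_cast <;> omega

/-- Stable range. -/
lemma stable (p : Ptn) (s : ℤ) : ∃ M0 : ℤ, ∀ x, M0 ≤ x →
    (¬ ∃ i, av p i = x) ∧ (∃ i, av p i = s - x) ∧ GG p s x = x - s - 1 := by
  classical
  obtain ⟨N, hN⟩ := p.finite_support'
  refine ⟨p.toFun 1 + (N : ℕ) + |s| + 1, fun x hx => ?_⟩
  have h1 := neg_abs_le s
  have h2 := le_abs_self s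
  have hub : ∀ k, av p k < x := by
    intro k
    have := p.antitone' 1 k (PNat.one_le k)
    unfold av
    omega
  have hk : 0 < (x - s).toNat := by omega
  set k : ℕ+ := ⟨(x - s).toNat, hk⟩ with hkd
  have hkv : ((k : ℕ) : ℤ) = x - s := by rw [hkd]; simp only [PNat.mk_coe]; omega
  have hNk : N ≤ k := by rw [← PNat.coe_le_coe]; omega
  have hak : av p k = s - x := by unfold av; rw [hN k hNk, hkv]; simp
  refine ⟨fun ⟨i, hi⟩ => (hub i).ne hi, ⟨k, hak⟩, ?_⟩
  have : (Finset.Ioo (s - x) x).filter (fun y => ∃ i, av p i = y)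
      = (Finset.Ico 1 k).image (av p) := by
    ext y
    simp only [Finset.mem_filter, Finset.mem_Ioo, Finset.mem_image, Finset.mem_Ico]
    constructor
    · rintro ⟨⟨h1, h2⟩, l, rfl⟩
      rw [← hak] at h1
      exact ⟨l, ⟨PNat.one_le l, (av_anti p).lt_iff_gt.mp h1⟩, rfl⟩
    · rintro ⟨l, ⟨h1, h2⟩, rfl⟩
      rw [← hak]
      exact ⟨⟨av_anti p h2, hub l⟩, l, rfl⟩
  unfold GG
  rw [this, Finset.card_image_of_injective _ (av_anti p).injective, PNat.card_Ico]
  have := k.pos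
  simp only [PNat.one_coe]
  omega

/-- The diagonal contribution. -/
def DD (p : Ptn) (s : ℤ) : Set ℤ := {x | 2 * x = s ∧ (∃ i, av p i = x) ∧ 0 ≤ x}

lemma UU_fin (p : Ptn) (s : ℤ) : (UU p s).Finite := by
  obtain ⟨M0, hM0⟩ := stable p s
  refine (Set.finite_Ico (s / 2 + 1) M0).subset ?_
  rintro x ⟨h1, h2, h3, h4⟩
  refine ⟨by omega, ?_⟩
  by_contra h
  exact (hM0 x (by omega)).1 h2

lemma WW_fin (p : Ptn) (s : ℤ) : (WW p s).Finite := by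
  obtain ⟨M0, hM0⟩ := stable p s
  refine (Set.finite_Ico (s / 2 + 1) M0).subset ?_
  rintro x ⟨h1, h2, h3, h4⟩
  refine ⟨by omega, ?_⟩
  by_contra h
  exact (c_iff p _).mp h3 (hM0 x (by omega)).2.1


lemma WU (p : Ptn) (s : ℤ) :
    ((WW p s).ncard : ℤ) - ((UU p s).ncard : ℤ) - ((DD p s).ncard : ℤ)
      = max (s + 1) 0 - max (s / 2 + 1) 0 := by
  classical
  obtain ⟨M0, hM0⟩ := stable p s
  set M := max M0 (s / 2 + 1) with hMd
  have hM := telescope p s (s / 2 + 1) (by omega) M (le_max_right _ _)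
  have hW : WW p s = ↑((Finset.Ico (s / 2 + 1) M).filter (· ∈ WW p s)) := by
    ext x
    simp only [Finset.coe_filter, Finset.mem_Ico, Set.mem_ofPred_eq]
    refine ⟨fun h => ⟨⟨?_, ?_⟩, h⟩, fun h => h.2⟩
    · have := h.1; omega
    · by_contra h'
      exact (c_iff p _).mp h.2.2.1 (hM0 x (by omega)).2.1
  have hU : UU p s = ↑((Finset.Ico (s / 2 + 1) M).filter (· ∈ UU p s)) := by
    ext x
    simp only [Finset.coe_filter, Finset.mem_Ico, Set.mem_ofPred_eq]
    refine ⟨fun h => ⟨⟨?_, ?_⟩, h⟩, fun h => h.2⟩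
    · have := h.1; omega
    · by_contra h'
      exact (hM0 x (by omega)).1 h.2.1
  rw [hW, hU, Set.ncard_coe_finset, Set.ncard_coe_finset, hM]
  have hG := (hM0 M (le_max_left _ _)).2.2
  have hG0 : GG p s (s / 2 + 1) = if 2 * (s / 2) = s ∧ ∃ i, av p i = s / 2 then 1 else 0 := by
    unfold GG
    by_cases he : 2 * (s / 2) = s
    · have : Finset.Ioo (s - (s / 2 + 1)) (s / 2 + 1) = {s / 2} := by
        ext y; simp only [Finset.mem_Ioo, Finset.mem_singleton]; omega
      rw [this, Finset.filter_singleton]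
      simp only [he, true_and]
      split_ifs <;> simp
    · have : Finset.Ioo (s - (s / 2 + 1)) (s / 2 + 1) = ∅ := by
        ext y; simp only [Finset.mem_Ioo, Finset.notMem_empty, iff_false]; omega
      rw [this]; simp [he]
  have hD : DD p s = if (2 * (s / 2) = s ∧ ∃ i, av p i = s / 2) ∧ 0 ≤ s / 2 then {s / 2} else ∅ := by
    ext x
    unfold DD
    simp only [Set.mem_ofPred_eq]
    split_ifs with h
    · simp only [Set.mem_singleton_iff]
      constructor
      · intro h; omega
      · rintro rfl; exact ⟨h.1.1, h.1.2, h.2⟩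
    · simp only [Set.mem_empty_iff_false, iff_false]
      rintro ⟨h1, h2, h3⟩
      have : x = s / 2 := by omega
      subst this
      exact h ⟨⟨h1, h2⟩, h3⟩
  rw [hD, hG0, hG]
  by_cases hq : 2 * (s / 2) = s ∧ ∃ i, av p i = s / 2
  · simp only [hq, if_true, true_and]
    split_ifs
    · rw [Set.ncard_singleton]; push_cast; omega
    · rw [Set.ncard_empty]; push_cast; omega
  · simp only [hq, if_false, false_and, Set.ncard_empty]
    push_cast; omega

/-- pair sets -/
def PU (p : Ptn) (s : ℤ) : Set (ℕ+ × ℕ+) :=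
  {q | q.1 < q.2 ∧ (q.2 : ℕ) ≤ p.toFun q.1 ∧ av p q.1 + av p q.2 = s}
def PD (p : Ptn) (s : ℤ) : Set (ℕ+ × ℕ+) :=
  {q | q.1 = q.2 ∧ (q.2 : ℕ) ≤ p.toFun q.1 ∧ av p q.1 + av p q.2 = s}
def PL (p : Ptn) (s : ℤ) : Set (ℕ+ × ℕ+) :=
  {q | q.1 < q.2 ∧ (q.1 : ℕ) ≤ p.toFun q.2 ∧ cv p q.1 + cv p q.2 = s}
def PW (p : Ptn) (s : ℤ) : Set (ℕ+ × ℕ+) :=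
  {q | q.1 < q.2 ∧ ¬ (q.1 : ℕ) ≤ p.toFun q.2 ∧ cv p q.1 + cv p q.2 = s}

lemma PU_bij (p : Ptn) (s : ℤ) : Set.BijOn (fun q => av p q.1) (PU p s) (UU p s) := by
  refine ⟨?_, ?_, ?_⟩
  · rintro ⟨i, j⟩ ⟨h1, h2, h3⟩
    simp only at h1 h2 h3 ⊢
    have := av_anti p h1
    have hG := GG_a p s (av p i) i j h1 rfl (by omega)
    refine ⟨by omega, ⟨i, rfl⟩, ⟨j, by omega⟩, ?_⟩
    rw [hG]; unfold av; omega
  · rintro ⟨i, j⟩ ⟨h1, h2, h3⟩ ⟨i', j'⟩ ⟨h1', h2', h3'⟩ h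
    simp only at *
    have e1 := (av_anti p).injective h
    have e2 : j = j' := (av_anti p).injective (by omega)
    rw [e1, e2]
  · rintro x ⟨h1, ⟨i, hi⟩, ⟨j, hj⟩, h4⟩
    have hij : i < j := (av_anti p).lt_iff_gt.mp (by omega)
    have hG := GG_a p s x i j hij hi hj
    refine ⟨(i, j), ⟨hij, ?_, by simp only; omega⟩, hi⟩
    simp only
    unfold av at hi; omega

lemma PD_bij (p : Ptn) (s : ℤ) : Set.BijOn (fun q => av p q.1) (PD p s) (DD p s) := by
  refine ⟨?_, ?_, ?_⟩
  · rintro ⟨i, j⟩ ⟨h1, h2, h3⟩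
    simp only at h1 h2 h3 ⊢
    subst h1
    refine ⟨by omega, ⟨i, rfl⟩, ?_⟩
    unfold av; omega
  · rintro ⟨i, j⟩ ⟨h1, h2, h3⟩ ⟨i', j'⟩ ⟨h1', h2', h3'⟩ h
    simp only at *
    have e1 := (av_anti p).injective h
    rw [← h1, ← h1', e1]
  · rintro x ⟨h1, ⟨i, hi⟩, h4⟩
    refine ⟨(i, i), ⟨rfl, ?_, by simp only; omega⟩, hi⟩
    simp only
    unfold av at hi; omega

lemma PW_bij (p : Ptn) (s : ℤ) : Set.BijOn (fun q => cv p q.2) (PW p s) (WW p s) := by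
  refine ⟨?_, ?_, ?_⟩
  · rintro ⟨i, j⟩ ⟨h1, h2, h3⟩
    simp only at h1 h2 h3 ⊢
    have := cv_mono p h1
    have hG := GG_c p s (cv p j) i j h1 (by omega) rfl
    refine ⟨by omega, ⟨j, rfl⟩, ⟨i, by omega⟩, ?_⟩
    rw [box_iff] at h2
    rw [hG]; unfold cv at *; omega
  · rintro ⟨i, j⟩ ⟨h1, h2, h3⟩ ⟨i', j'⟩ ⟨h1', h2', h3'⟩ h
    simp only at *
    have e1 := (cv_mono p).injective h
    have e2 : i = i' := (cv_mono p).injective (by omega)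
    rw [e1, e2]
  · rintro x ⟨h1, ⟨j, hj⟩, ⟨i, hi⟩, h4⟩
    have hij : i < j := (cv_mono p).lt_iff_lt.mp (by omega)
    have hG := GG_c p s x i j hij hi hj
    refine ⟨(i, j), ⟨hij, ?_, by simp only; omega⟩, hj⟩
    simp only
    rw [box_iff]
    unfold cv at hi hj; omega

lemma ncard_of_bij {α β : Type*} {f : α → β} {s : Set α} {t : Set β} (h : Set.BijOn f s t) :
    s.ncard = t.ncard := by
  rw [← h.image_eq, Set.ncard_image_of_injOn h.injOn]

def Boxes (p : Ptn) : Set (ℕ+ × ℕ+) := {q | (q.2 : ℕ) ≤ p.toFun q.1}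

lemma Boxes_fin (p : Ptn) : (Boxes p).Finite := by
  obtain ⟨m, hm⟩ := exists_pnat (p.toFun 1 + 1) (by omega)
  refine ((col_finite p 1).prod (Set.finite_Iic m)).subset ?_
  rintro ⟨i, j⟩ h
  have h : (j : ℕ) ≤ p.toFun i := h
  have := j.pos
  have := p.antitone' 1 i (PNat.one_le i)
  refine ⟨?_, ?_⟩
  · simp only [Set.mem_ofPred_eq, PNat.one_coe]; omega
  · simp only [Set.mem_Iic, ← PNat.coe_le_coe]; omega

lemma PL_fin (p : Ptn) (s : ℤ) : (PL p s).Finite := by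
  refine ((Boxes_fin p).image Prod.swap).subset ?_
  rintro ⟨i, j⟩ ⟨h1, h2, h3⟩
  exact ⟨(j, i), h2, rfl⟩

lemma PW_fin (p : Ptn) (s : ℤ) : (PW p s).Finite :=
  Set.Finite.of_finite_image (by rw [(PW_bij p s).image_eq]; exact WW_fin p s) (PW_bij p s).injOn

lemma degd_eq (δ : ℤ) (p : Ptn) : degd δ p = (PL p (-δ)).ncard + (PW p (-δ)).ncard := by
  have hdisj : Disjoint (PL p (-δ)) (PW p (-δ)) := by
    rw [Set.disjoint_left]
    exact fun q h1 h2 => h2.2.1 h1.2.1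
  rw [← Set.ncard_union_eq hdisj (PL_fin _ _) (PW_fin _ _)]
  unfold degd
  congr 1
  ext ⟨i, j⟩
  have : ed δ p i + ed δ p j = 0 ↔ cv p i + cv p j = -δ := by
    rw [← Int.cast_inj (α := ℚ)]
    unfold ed cv
    push_cast
    constructor <;> intro h <;> linarith
  simp only [Set.mem_ofPred_eq, this, PL, PW, Set.mem_union]
  tauto

lemma mult_set (δ : ℤ) (p : Ptn) :
    ({q | q ∈ Boxes p ∧ dbox p q.1 q.2 = 1 - δ} : Set (ℕ+ × ℕ+)).ncard
      = (PU p (-δ)).ncard + (PD p (-δ)).ncard + (PL p (-δ)).ncard := by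
  have hL : (PL p (-δ)).ncard = (Prod.swap '' PL p (-δ)).ncard :=
    (Set.ncard_image_of_injective _ Prod.swap_injective).symm
  have hfU : (PU p (-δ)).Finite := (Boxes_fin p).subset fun q h => h.2.1
  have hfD : (PD p (-δ)).Finite := (Boxes_fin p).subset fun q h => h.2.1
  have hd1 : Disjoint (PU p (-δ)) (PD p (-δ)) := by
    rw [Set.disjoint_left]
    exact fun q h1 h2 => h1.1.ne h2.1
  have hd2 : Disjoint (PU p (-δ) ∪ PD p (-δ)) (Prod.swap '' PL p (-δ)) := by
    rw [Set.disjoint_left]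
    rintro q h1 ⟨r, h2, rfl⟩
    have := h2.1
    rcases h1 with h | h
    · exact lt_asymm this h.1
    · exact this.ne h.1.symm
  rw [hL, ← Set.ncard_union_eq hd1 hfU hfD,
    ← Set.ncard_union_eq hd2 (hfU.union hfD) ((PL_fin _ _).image _)]
  congr 1
  ext ⟨i, j⟩
  simp only [Set.mem_union, Set.image_swap_eq_preimage_swap, Set.mem_preimage, Prod.swap_prod_mk,
    PU, PD, PL, Set.mem_ofPred_eq, Boxes, dbox, av, cv, ← PNat.coe_lt_coe, ← PNat.coe_inj]
  split_ifs <;> omega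

lemma prod_mult (δ : ℚ) (S : Finset (ℕ+ × ℕ+)) (h : ℕ+ × ℕ+ → ℚ) (d : ℕ+ × ℕ+ → ℚ)
    (hS : ∀ q ∈ S, h q ≠ 0) :
    (∏ q ∈ S, (C (h q)⁻¹ * (X + C (d q - 1))) : ℚ[X]) ≠ 0 ∧
    (∏ q ∈ S, (C (h q)⁻¹ * (X + C (d q - 1))) : ℚ[X]).rootMultiplicity δ
      = (S.filter (fun q => d q = 1 - δ)).card := by
  classical
  induction S using Finset.induction_on with
  | empty => simp [rootMultiplicity_eq_zero]
  | insert a S ha ih =>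
    obtain ⟨ih1, ih2⟩ := ih (fun q hq => hS q (Finset.mem_insert_of_mem hq))
    have h0 := hS a (Finset.mem_insert_self _ _)
    have hX : (X + C (d a - 1) : ℚ[X]) ≠ 0 := X_add_C_ne_zero _
    have hC : (C (h a)⁻¹ : ℚ[X]) ≠ 0 := by simpa using h0
    have hne := mul_ne_zero (mul_ne_zero hC hX) ih1
    rw [Finset.prod_insert ha]
    refine ⟨hne, ?_⟩
    rw [rootMultiplicity_mul hne, rootMultiplicity_mul (mul_ne_zero hC hX), ih2,
      rootMultiplicity_C, Finset.filter_insert]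
    have hx : (X + C (d a - 1) : ℚ[X]) = X - C (1 - d a) := by
      simp only [C_sub]; ring
    rw [hx, rootMultiplicity_X_sub_C]
    have hiff : δ = 1 - d a ↔ d a = 1 - δ := by constructor <;> intro h <;> linarith
    simp only [hiff]
    split_ifs with hh
    · rw [Finset.card_insert_of_notMem (by simp [ha])]; ring
    · ring

lemma king_eq (p : Ptn) : king p = ∏ q ∈ (Boxes_fin p).toFinset,
    (C ((hook p q.1 q.2 : ℤ) : ℚ)⁻¹ * (X + C (((dbox p q.1 q.2 : ℤ) : ℚ) - 1))) :=
  finprod_mem_eq_finite_toFinset_prod _ (Boxes_fin p)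

lemma king_mult (δ : ℤ) (p : Ptn) : king p ≠ 0 ∧ (king p).rootMultiplicity (δ : ℚ)
    = (PU p (-δ)).ncard + (PD p (-δ)).ncard + (PL p (-δ)).ncard := by
  rw [king_eq, ← mult_set]
  have := prod_mult (δ : ℚ) (Boxes_fin p).toFinset (fun q => (hook p q.1 q.2 : ℚ))
    (fun q => (dbox p q.1 q.2 : ℚ)) (by
      rintro ⟨i, j⟩ hq
      have hq : (j : ℕ) ≤ p.toFun i := (Boxes_fin p).mem_toFinset.mp hq
      have := (box_iff p i j).mp hq
      simp only [ne_eq, Int.cast_eq_zero]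
      unfold hook; omega)
  refine ⟨this.1, this.2.trans ?_⟩
  rw [← Set.ncard_coe_finset]
  congr 1
  ext q
  simp only [Finset.coe_filter, Set.Finite.mem_toFinset, Set.mem_ofPred_eq]
  refine and_congr_right fun _ => ?_
  rw [← Int.cast_inj (α := ℚ)]; push_cast; rfl

lemma diff_eq (δ : ℤ) (p : Ptn) :
    (degd δ p : ℤ) - ((king p).rootMultiplicity (δ : ℚ) : ℤ)
      = max (-δ + 1) 0 - max (-δ / 2 + 1) 0 := by
  rw [degd_eq, (king_mult δ p).2, ← WU p (-δ), ncard_of_bij (PU_bij p _),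
    ncard_of_bij (PD_bij p _), ncard_of_bij (PW_bij p _)]
  push_cast; ring

lemma king_empty : king Ptn.empty = 1 := by
  rw [king_eq]
  refine Finset.prod_eq_one ?_
  rintro ⟨i, j⟩ hq
  have hq : (j : ℕ) ≤ 0 := (Boxes_fin Ptn.empty).mem_toFinset.mp hq
  have := j.pos
  omega

end KingAux

/-- the King polynomial is nonzero and the multiplicity of δ as a root
of P_λ equals deg_δ(λ) − deg_δ(∅). -/
theorem stmt10 (δ : ℤ) (p : Ptn) :
    king p ≠ 0 ∧
    ((king p).rootMultiplicity (δ : ℚ) : ℤ)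
      = (degd δ p : ℤ) - (degd δ Ptn.empty : ℤ) := by
  refine ⟨(king_mult δ p).1, ?_⟩
  have h1 := diff_eq δ p
  have h2 := diff_eq δ Ptn.empty
  have h3 : (king Ptn.empty).rootMultiplicity (δ : ℚ) = 0 := by
    rw [king_empty]; simp [rootMultiplicity_eq_zero]
  rw [h3] at h2
  push_cast at h2
  linarith
end
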